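/- arXiv:2003.14007 — 8 statements merged into one kernel-verified Lean document; each statement's English description precedes it below -/
import Mathlib

section
/- Let n ≥ 3. Every sequence over the dihedral group D_{2n} of length n + 1 has a nonempty 1-product subsequence of length at most n; moreover, the sequence x·y^{[n−1]} (one copy of x together with n−1 copies of y) is a 1-product free sequence of length n. Hence s_{≤n}(D_{2n}) = n + 1, where s_{≤n}(D_{2n}) is the smallest ℓ such that every sequence over D_{2n} of length ≥ ℓ has a nonempty 1-product subsequence of length at most n. -/
/-- `T` is a 1-product sequence: its terms can be ordered so that their product is `1`. -/
def IsOneProdSeq {G : Type*} [Group G] (T : Multiset G) : Prop :=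
  ∃ l : List G, (l : Multiset G) = T ∧ l.prod = 1

/-!
Write a sequence over `D_{2n}` as rotations `r a`, `a ∈ A`, and reflections `sr b`, `b ∈ B`, and
let `p_j` be the sum of the first `j` terms of `A`. If `|B| * (|A| + 1) > n`, then two of the
elements `b + p_j` of `ZMod n` coincide, say `b + p_j = b' + p_j'` with `j ≤ j'`; so
`b = b' + ∑ P`, where `P` is the block of `A` between positions `j` and `j'`. If `b` and `b'` come
from the same term of `B`, then `∑ P = 0` and the rotations in `P` have product `1`; otherwise
`sr b' * r (∑ P) * sr b = 1`.

With at least two reflections, `n - 2` rotations are enough for the collision, so the subsequence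
found has at most `n` terms. With at most one reflection there are `n` rotations, and the same
collision with `B = {0}` produces a zero-sum block.

For the lower bound, every product in which the reflection occurs is a reflection, and the
remaining products are `y ^ m` with `0 < m < n`.
-/

section Multiset

theorem exists_multiset_le_card_eq {α : Type*} {s : Multiset α} {k : ℕ} (hk : k ≤ Multiset.card s) :
    ∃ t ≤ s, Multiset.card t = k := by
  induction s using Quotient.inductionOn with
  | h l =>
    exact ⟨(l.take k : List α), Multiset.coe_le.2 (l.take_sublist k).subperm,
      by simpa using hk⟩

variable {M : Type*} [AddCommGroup M] [Fintype M]

theorem exists_eq_add_sum_of_card_lt_finset (A : Multiset M) (B : Finset M)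
    (h : Fintype.card M < B.card * (Multiset.card A + 1)) :
    ∃ P ≤ A, ∃ b ∈ B, ∃ b' ∈ B, b = b' + P.sum ∧ (b = b' → P ≠ 0) := by
  induction A using Quotient.inductionOn with
  | h L =>
    let prefixSum (j : ℕ) : M := (L.take j).sum
    obtain ⟨⟨b, j⟩, hbj, ⟨b', j'⟩, hbj', hne, heq⟩ :=
      Finset.exists_ne_map_eq_of_card_lt_of_maps_to
        (s := B ×ˢ Finset.range (L.length + 1)) (t := Finset.univ) (by simpa using h)
        (f := fun p ↦ p.1 + prefixSum p.2) (fun _ _ ↦ by simp)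
    wlog hjj' : j ≤ j' generalizing b j b' j'
    · exact this b' j' hbj' b j hbj hne.symm heq.symm (le_of_not_ge hjj')
    simp only [Finset.mem_product, Finset.mem_range] at hbj hbj'
    let P := (L.take j').drop j
    have hP : P.Sublist L := (List.drop_sublist _ _).trans (List.take_sublist _ _)
    have hsplit : prefixSum j' = prefixSum j + P.sum := by
      simpa [prefixSum, P, List.take_take, hjj'] using
        (List.sum_take_add_sum_drop (L.take j') j).symm
    refine ⟨P, Multiset.coe_le.2 hP.subperm, b, hbj.1, b', hbj'.1, ?_, ?_⟩
    · have : b + prefixSum j = b' + P.sum + prefixSum j := by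
        simpa only [hsplit, add_assoc, add_comm P.sum] using heq
      simpa using add_right_cancel this
    · rintro rfl hP0
      have hlen : P.length = 0 := by simpa using congrArg Multiset.card hP0
      simp only [P, List.length_drop, List.length_take] at hlen
      exact hne (by rw [show j = j' by omega])

theorem exists_le_sum_eq_zero_of_card_le (A : Multiset M)
    (h : Fintype.card M ≤ Multiset.card A) : ∃ P ≤ A, P ≠ 0 ∧ P.sum = 0 := by
  obtain ⟨P, hPA, b, hb, b', hb', hsum, hP⟩ :=
    exists_eq_add_sum_of_card_lt_finset A {0} (by simpa using Nat.lt_succ_of_le h)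
  obtain rfl := Finset.mem_singleton.1 hb
  obtain rfl := Finset.mem_singleton.1 hb'
  exact ⟨P, hPA, hP rfl, by simpa using hsum.symm⟩

theorem exists_eq_add_sum_of_card_lt (A B : Multiset M)
    (h : Fintype.card M < Multiset.card B * (Multiset.card A + 1)) :
    (∃ P ≤ A, P ≠ 0 ∧ P.sum = 0) ∨ ∃ P ≤ A, ∃ b b', {b, b'} ≤ B ∧ b = b' + P.sum := by
  by_cases hB : B.Nodup
  · obtain ⟨P, hPA, b, hb, b', hb', hsum, hP⟩ :=
      exists_eq_add_sum_of_card_lt_finset A ⟨B, hB⟩ h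
    by_cases hbb' : b = b'
    · exact .inl ⟨P, hPA, hP hbb', by simpa [hbb'] using hsum.symm⟩
    · refine .inr ⟨P, hPA, b, b', (Multiset.le_iff_subset (by simpa using hbb')).2 ?_, hsum⟩
      simpa [Multiset.insert_eq_cons, Multiset.cons_subset] using And.intro hb hb'
  · obtain ⟨b, hb⟩ : ∃ b, b ::ₘ b ::ₘ 0 ≤ B := by
      simpa only [Multiset.nodup_iff_le, not_forall, not_not] using hB
    exact .inr ⟨0, A.zero_le, b, b, hb, by simp⟩

end Multiset

section OneProduct

variable {G : Type*} [Group G]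

/-- `S` has a nonempty 1-product subsequence of length at most `k`; the invariant `s_{≤k}(G)` is
the least length that forces this property. -/
def HasShortOneProdSubseq (k : ℕ) (S : Multiset G) : Prop :=
  ∃ T, T ≤ S ∧ T ≠ 0 ∧ Multiset.card T ≤ k ∧ IsOneProdSeq T

/-- `S` is 1-product free: none of its nonempty subsequences is a 1-product sequence. -/
def IsOneProdFree (S : Multiset G) : Prop :=
  ∀ T, T ≤ S → T ≠ 0 → ¬ IsOneProdSeq T

theorem HasShortOneProdSubseq.mono {k m : ℕ} {S S' : Multiset G}
    (h : HasShortOneProdSubseq k S) (hkm : k ≤ m) (hS : S ≤ S') :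
    HasShortOneProdSubseq m S' :=
  let ⟨T, hT, hT0, hcard, hprod⟩ := h
  ⟨T, hT.trans hS, hT0, hcard.trans hkm, hprod⟩

theorem IsOneProdFree.not_hasShortOneProdSubseq {k : ℕ} {S : Multiset G} (h : IsOneProdFree S) :
    ¬ HasShortOneProdSubseq k S :=
  fun ⟨T, hT, hT0, _, hprod⟩ ↦ h T hT hT0 hprod

theorem IsOneProdSeq.prod_map_eq_one {M : Type*} [CommMonoid M] {T : Multiset G}
    (h : IsOneProdSeq T) (f : G →* M) : (T.map f).prod = 1 := by
  obtain ⟨l, rfl, hl⟩ := h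
  rw [Multiset.map_coe, Multiset.prod_coe, List.prod_hom, hl, map_one]

theorem isOneProdSeq_replicate_iff {m : ℕ} {g : G} :
    IsOneProdSeq (Multiset.replicate m g) ↔ g ^ m = 1 := by
  constructor
  · rintro ⟨l, hl, hprod⟩
    rw [← Multiset.coe_replicate, Multiset.coe_eq_coe, List.perm_replicate] at hl
    rwa [hl, List.prod_replicate] at hprod
  · exact fun h ↦ ⟨List.replicate m g, rfl, by rwa [List.prod_replicate]⟩

theorem isOneProdFree_cons_replicate {M : Type*} [CommMonoid M] (f : G →* M) {g h : G} {k : ℕ}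
    (hfg : f g = 1) (hfh : f h ≠ 1) (hk : k < orderOf g) :
    IsOneProdFree (h ::ₘ Multiset.replicate k g) := by
  intro T hT hT0 hprod
  by_cases hmem : h ∈ T
  · obtain ⟨T', rfl⟩ := Multiset.exists_cons_of_mem hmem
    obtain ⟨m, -, rfl⟩ := Multiset.le_replicate_iff.1 ((Multiset.cons_le_cons_iff h).1 hT)
    exact hfh (by simpa [hfg] using hprod.prod_map_eq_one f)
  · obtain ⟨m, hmk, rfl⟩ :=
      Multiset.le_replicate_iff.1 ((Multiset.le_cons_of_notMem hmem).1 hT)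
    have hm : m ≠ 0 := by rintro rfl; exact hT0 rfl
    exact pow_ne_one_of_lt_orderOf hm (hmk.trans_lt hk) (isOneProdSeq_replicate_iff.1 hprod)

end OneProduct

section Dihedral

open DihedralGroup

variable {n : ℕ}

/-- The sign character of the dihedral group: `1` on rotations and `-1` on reflections. -/
def dihedralSign (n : ℕ) : DihedralGroup n →* ℤˣ :=
  MonoidHom.mk' (fun | r _ => 1 | sr _ => -1) (by rintro (_ | _) (_ | _) <;> rfl)

theorem isOneProdFree_sr_cons_replicate_r_one {k : ℕ} (hk : k < n) (i : ZMod n) :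
    IsOneProdFree (sr i ::ₘ Multiset.replicate k (r 1)) :=
  isOneProdFree_cons_replicate (dihedralSign n) rfl (by decide : (-1 : ℤˣ) ≠ 1)
    (by rwa [orderOf_r_one])

theorem exists_eq_map_r_add_map_sr (S : Multiset (DihedralGroup n)) :
    ∃ A B : Multiset (ZMod n), S = A.map r + B.map sr := by
  induction S using Multiset.induction with
  | empty => exact ⟨0, 0, rfl⟩
  | cons g S ih =>
    obtain ⟨A, B, rfl⟩ := ih
    cases g with
    | r i => exact ⟨i ::ₘ A, B, by simp⟩
    | sr i => exact ⟨A, i ::ₘ B, by simp⟩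

theorem prod_map_r (l : List (ZMod n)) : (l.map r).prod = r l.sum := by
  induction l with
  | nil => rfl
  | cons a l ih => simp [ih]

theorem isOneProdSeq_map_r {P : Multiset (ZMod n)} (hP : P.sum = 0) :
    IsOneProdSeq (P.map r) :=
  ⟨P.toList.map r, by rw [← Multiset.map_coe, Multiset.coe_toList],
    by rw [prod_map_r, Multiset.sum_toList, hP, r_zero]⟩

theorem isOneProdSeq_map_r_add_pair {P : Multiset (ZMod n)} {b b' : ZMod n}
    (h : b = b' + P.sum) : IsOneProdSeq (P.map r + {sr b, sr b'}) := by
  refine ⟨sr b' :: (P.toList.map r ++ [sr b]), ?_, ?_⟩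
  · rw [← Multiset.cons_coe, ← Multiset.coe_add, ← Multiset.map_coe, Multiset.coe_toList,
      Multiset.coe_singleton, ← Multiset.add_cons, Multiset.pair_comm, Multiset.insert_eq_cons]
  · calc (sr b' :: (P.toList.map r ++ [sr b])).prod
        = sr b' * (r P.sum * sr b) := by
          rw [List.prod_cons, List.prod_append, prod_map_r, Multiset.sum_toList,
            List.prod_singleton]
      _ = r (b - (b' + P.sum)) := by rw [← mul_assoc, sr_mul_r, sr_mul_sr]
      _ = 1 := by rw [h, sub_self, r_zero]

theorem hasShortOneProdSubseq_map_r [NeZero n] {A : Multiset (ZMod n)}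
    (hA : n ≤ Multiset.card A) : HasShortOneProdSubseq n (A.map r) := by
  obtain ⟨A', hA'A, hA'⟩ := exists_multiset_le_card_eq hA
  obtain ⟨P, hPA', hP0, hsum⟩ :=
    exists_le_sum_eq_zero_of_card_le A' (by rw [ZMod.card, hA'])
  refine ⟨P.map r, Multiset.map_le_map (hPA'.trans hA'A), by simpa using hP0, ?_,
    isOneProdSeq_map_r hsum⟩
  simpa [hA'] using Multiset.card_le_card hPA'

theorem hasShortOneProdSubseq_map_r_add_map_sr [NeZero n] {A B : Multiset (ZMod n)}
    (h : n < Multiset.card B * (Multiset.card A + 1)) :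
    HasShortOneProdSubseq (Multiset.card A + 2) (A.map r + B.map sr) := by
  rcases exists_eq_add_sum_of_card_lt A B (by rwa [ZMod.card]) with
    ⟨P, hPA, hP0, hsum⟩ | ⟨P, hPA, b, b', hbb', hsum⟩
  · refine ⟨P.map r, (Multiset.map_le_map hPA).trans (Multiset.le_add_right _ _),
      by simpa using hP0, ?_, isOneProdSeq_map_r hsum⟩
    simpa using (Multiset.card_le_card hPA).trans (Nat.le_add_right _ 2)
  · have hpair : {sr b, sr b'} ≤ B.map sr := by simpa using Multiset.map_le_map (f := sr) hbb'
    refine ⟨P.map r + {sr b, sr b'}, add_le_add (Multiset.map_le_map hPA) hpair, by simp, ?_,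
      isOneProdSeq_map_r_add_pair hsum⟩
    simpa using Multiset.card_le_card hPA

theorem hasShortOneProdSubseq_of_lt_card (hn : 3 ≤ n) {S : Multiset (DihedralGroup n)}
    (hS : n < Multiset.card S) : HasShortOneProdSubseq n S := by
  have : NeZero n := ⟨by omega⟩
  obtain ⟨A, B, rfl⟩ := exists_eq_map_r_add_map_sr S
  have hAB : n < Multiset.card A + Multiset.card B := by simpa using hS
  by_cases hB : 2 ≤ Multiset.card B
  · obtain ⟨A', hA'A, hA'⟩ := exists_multiset_le_card_eq (min_le_left (Multiset.card A) (n - 2))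
    have hcollide : n < Multiset.card B * (Multiset.card A' + 1) := by
      rcases le_total (Multiset.card A) (n - 2) with h | h
      · rw [hA', min_eq_left h]
        nlinarith
      · rw [hA', min_eq_right h]
        have := Nat.mul_le_mul_right (n - 2 + 1) hB
        omega
    exact (hasShortOneProdSubseq_map_r_add_map_sr hcollide).mono (by omega)
      (add_le_add_left (Multiset.map_le_map hA'A) _)
  · exact (hasShortOneProdSubseq_map_r (by omega)).mono le_rfl (Multiset.le_add_right _ _)

end Dihedral

/-- Let `n ≥ 3`.  Every sequence over `D_{2n}` of length `n + 1` has a nonempty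
1-product subsequence of length at most `n`; moreover the sequence `x·y^{[n−1]}` is a
1-product free sequence of length `n`.  Hence `s_{≤n}(D_{2n}) = n + 1`. -/
theorem stmt8 (n : ℕ) (hn : 3 ≤ n) :
    (∀ S : Multiset (DihedralGroup n), Multiset.card S = n + 1 →
        ∃ T, T ≤ S ∧ T ≠ 0 ∧ Multiset.card T ≤ n ∧ IsOneProdSeq T) ∧
    (∀ T, T ≤ (DihedralGroup.sr 0 ::ₘ
          Multiset.replicate (n - 1) (DihedralGroup.r 1) : Multiset (DihedralGroup n)) →
        T ≠ 0 → ¬ IsOneProdSeq T) ∧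
    Multiset.card (DihedralGroup.sr 0 ::ₘ
        Multiset.replicate (n - 1) (DihedralGroup.r 1) : Multiset (DihedralGroup n)) = n ∧
    IsLeast {ℓ : ℕ | ∀ S : Multiset (DihedralGroup n), ℓ ≤ Multiset.card S →
        ∃ T, T ≤ S ∧ T ≠ 0 ∧ Multiset.card T ≤ n ∧ IsOneProdSeq T} (n + 1) := by
  have hfree : IsOneProdFree
      (DihedralGroup.sr 0 ::ₘ Multiset.replicate (n - 1) (DihedralGroup.r (1 : ZMod n))) :=
    isOneProdFree_sr_cons_replicate_r_one (by omega) 0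
  have hcard : Multiset.card (DihedralGroup.sr 0 ::ₘ
      Multiset.replicate (n - 1) (DihedralGroup.r 1) : Multiset (DihedralGroup n)) = n := by
    rw [Multiset.card_cons, Multiset.card_replicate]
    omega
  refine ⟨fun S hS ↦ hasShortOneProdSubseq_of_lt_card hn (by omega), hfree, hcard,
    fun S hS ↦ hasShortOneProdSubseq_of_lt_card hn hS, fun ℓ hℓ ↦ ?_⟩
  by_contra hlt
  exact hfree.not_hasShortOneProdSubseq (hℓ _ (by omega))
end

section
/- Let n ≥ 3 and let T₁ be a sequence over N = x·H in the dihedral group D_{2n} with ⌊|T₁|/2⌋ > ⌊log₂ n⌋. Then T₁ has a nonempty 1-product subsequence T₁′ with |T₁′| even and |T₁′| ≤ 2⌊log₂ n⌋ + 2. -/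
/-!
Let `H` be the abelian group of rotations. Cut the sequence of reflections into `⌊log₂ |H|⌋ + 1`
disjoint pairs `a, b`. Each pair can be multiplied in two orders, giving mutually inverse elements
`a * b` and `b * a` of `H`. There are more sets of pairs than elements of `H`, so two distinct sets
of pairs have the same product; after removing their common pairs, multiplying the pairs of one set
in the order `a * b` and those of the other in the order `b * a` gives the product `1`. The argument
works for involutions of any group whose pairwise products lie in a finite abelian subgroup `H`.
-/

section OrderedProducts

variable {G ι M : Type*}

/-- The set `π(T)` of all products of the terms of the sequence `T`, one for each ordering of the
terms; `T` is a 1-product sequence when `1 ∈ π(T)`. -/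
def orderedProds [Monoid G] (T : Multiset G) : Set G :=
  {g | ∃ l : List G, (l : Multiset G) = T ∧ l.prod = g}

lemma isOneProdSeq_iff_one_mem_orderedProds [Group G] {T : Multiset G} :
    IsOneProdSeq T ↔ 1 ∈ orderedProds T :=
  Iff.rfl

lemma one_mem_orderedProds_zero [Monoid G] : (1 : G) ∈ orderedProds 0 :=
  ⟨[], rfl, rfl⟩

lemma mul_mem_orderedProds_pair [Monoid G] (a b : G) : a * b ∈ orderedProds {a, b} :=
  ⟨[a, b], rfl, List.prod_pair⟩

lemma mul_mem_orderedProds_add [Monoid G] {S T : Multiset G} {g h : G}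
    (hg : g ∈ orderedProds S) (hh : h ∈ orderedProds T) : g * h ∈ orderedProds (S + T) := by
  obtain ⟨l, rfl, rfl⟩ := hg
  obtain ⟨m, rfl, rfl⟩ := hh
  exact ⟨l ++ m, (Multiset.coe_add l m).symm, List.prod_append⟩

lemma map_prod_mem_orderedProds_sum [Monoid G] [CommMonoid M] (φ : M →* G) {s : Finset ι}
    {F : ι → Multiset G} {d : ι → M} (hd : ∀ i ∈ s, φ (d i) ∈ orderedProds (F i)) :
    φ (∏ i ∈ s, d i) ∈ orderedProds (∑ i ∈ s, F i) := by
  induction s using Finset.cons_induction with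
  | empty =>
    simpa only [Finset.prod_empty, Finset.sum_empty, map_one] using one_mem_orderedProds_zero
  | cons i s hi ih =>
    rw [Finset.prod_cons, Finset.sum_cons, map_mul]
    exact mul_mem_orderedProds_add (hd i (Finset.mem_cons_self i s))
      (ih fun j hj ↦ hd j (Finset.mem_cons_of_mem hj))

lemma mul_inv_mem_orderedProds_pair [Group G] {a b : G} (ha : a * a = 1) (hb : b * b = 1) :
    (a * b)⁻¹ ∈ orderedProds {a, b} := by
  rw [mul_inv_rev, inv_eq_of_mul_eq_one_left ha, inv_eq_of_mul_eq_one_left hb, Multiset.pair_comm]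
  exact mul_mem_orderedProds_pair b a

lemma exists_mem_inv_mem_orderedProds_of_card_eq_two [Group G] {H : Subgroup G} {P : Multiset G}
    (hP : P.card = 2) (hinvol : ∀ g ∈ P, g * g = 1) (hmul : ∀ g ∈ P, ∀ h ∈ P, g * h ∈ H) :
    ∃ d ∈ H, d ∈ orderedProds P ∧ d⁻¹ ∈ orderedProds P := by
  obtain ⟨a, b, rfl⟩ := Multiset.card_eq_two.1 hP
  have ha : a ∈ ({a, b} : Multiset G) := Multiset.mem_cons_self a {b}
  have hb : b ∈ ({a, b} : Multiset G) := Multiset.mem_cons_of_mem (Multiset.mem_singleton_self b)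
  exact ⟨a * b, hmul a ha b hb, mul_mem_orderedProds_pair a b,
    mul_inv_mem_orderedProds_pair (hinvol a ha) (hinvol b hb)⟩

lemma exists_disjoint_prod_eq_prod [CancelCommMonoid M] [Finite M] (f : ι → M) {s : Finset ι}
    (hs : Nat.card M < 2 ^ s.card) :
    ∃ A ⊆ s, ∃ B ⊆ s, Disjoint A B ∧ A ≠ B ∧ ∏ i ∈ A, f i = ∏ i ∈ B, f i := by
  classical
  have := Fintype.ofFinite M
  obtain ⟨A, hA, B, hB, hne, hprod⟩ := Finset.exists_ne_map_eq_of_card_lt_of_maps_to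
    (s := s.powerset) (t := Finset.univ) (f := fun A ↦ ∏ i ∈ A, f i)
    (by rwa [Finset.card_powerset, Finset.card_univ, ← Nat.card_eq_fintype_card])
    (fun _ _ ↦ Finset.mem_coe.2 (Finset.mem_univ _))
  exact ⟨A \ B, Finset.sdiff_subset.trans (Finset.mem_powerset.1 hA),
    B \ A, Finset.sdiff_subset.trans (Finset.mem_powerset.1 hB),
    disjoint_sdiff_sdiff, sdiff_ne_sdiff_iff.2 hne, Finset.prod_sdiff_eq_prod_sdiff_iff.2 hprod⟩

theorem exists_subset_isOneProdSeq_sum [Group G] [CommGroup M] [Finite M] (φ : M →* G)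
    {s : Finset ι} {F : ι → Multiset G} {d : ι → M} (hd : ∀ i ∈ s, φ (d i) ∈ orderedProds (F i))
    (hd_inv : ∀ i ∈ s, φ (d i)⁻¹ ∈ orderedProds (F i)) (hs : Nat.card M < 2 ^ s.card) :
    ∃ t ⊆ s, t.Nonempty ∧ IsOneProdSeq (∑ i ∈ t, F i) := by
  classical
  obtain ⟨A, hA, B, hB, hdisj, hne, hprod⟩ := exists_disjoint_prod_eq_prod d hs
  refine ⟨A ∪ B, Finset.union_subset hA hB, ?_, ?_⟩
  · rw [Finset.nonempty_iff_ne_empty, Ne, Finset.union_eq_empty]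
    exact fun ⟨hA, hB⟩ ↦ hne (hA.trans hB.symm)
  · have hAprod := map_prod_mem_orderedProds_sum φ fun i hi ↦ hd i (hA hi)
    have hBprod := map_prod_mem_orderedProds_sum φ fun i hi ↦ hd_inv i (hB hi)
    have hone := mul_mem_orderedProds_add hAprod hBprod
    rwa [← Finset.sum_union hdisj, ← map_mul, Finset.prod_inv_distrib, hprod, mul_inv_cancel,
      map_one, ← isOneProdSeq_iff_one_mem_orderedProds] at hone

end OrderedProducts

lemma exists_submultiset_card_eq {α : Type*} {T : Multiset α} {m : ℕ} (hm : m ≤ T.card) :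
    ∃ B ≤ T, B.card = m := by
  induction T using Quotient.inductionOn with
  | h l => exact ⟨l.take m, (l.take_sublist m).subperm, List.length_take_of_le hm⟩

lemma exists_fin_card_eq_sum_le {α : Type*} {k m : ℕ} {T : Multiset α} (hT : k * m ≤ T.card) :
    ∃ F : Fin k → Multiset α, (∀ i, (F i).card = m) ∧ ∑ i, F i ≤ T := by
  classical
  induction k generalizing T with
  | zero => exact ⟨Fin.elim0, fun i ↦ i.elim0, Multiset.zero_le T⟩
  | succ k ih =>
    rw [Nat.succ_mul] at hT
    obtain ⟨B, hBT, hB⟩ := exists_submultiset_card_eq (le_of_add_le_right hT)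
    obtain ⟨F, hF, hsum⟩ := ih (T := T - B) (by rw [Multiset.card_sub hBT]; lia)
    refine ⟨Fin.cons B F, Fin.cases hB hF, ?_⟩
    rw [Fin.sum_univ_succ, add_comm]
    exact (le_tsub_iff_right hBT).1 hsum

open scoped IsMulCommutative in
theorem stmt9_general {G : Type*} [Group G] (H : Subgroup G) [IsMulCommutative H] [Finite H]
    (T : Multiset G) (hinvol : ∀ g ∈ T, g * g = 1) (hmul : ∀ g ∈ T, ∀ h ∈ T, g * h ∈ H)
    (hlen : Nat.log 2 (Nat.card H) < T.card / 2) :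
    ∃ T' ≤ T, T' ≠ 0 ∧ Even T'.card ∧ T'.card ≤ 2 * Nat.log 2 (Nat.card H) + 2 ∧
      IsOneProdSeq T' := by
  obtain ⟨F, hF, hFT⟩ := exists_fin_card_eq_sum_le
    (k := Nat.log 2 (Nat.card H) + 1) (m := 2) (T := T) (by lia)
  have hmem (i) {g : G} (hg : g ∈ F i) : g ∈ T :=
    Multiset.mem_of_le ((Finset.single_le_sum_of_canonicallyOrdered (Finset.mem_univ i)).trans hFT)
      hg
  choose d hdH hd hd_inv using fun i ↦ exists_mem_inv_mem_orderedProds_of_card_eq_two (hF i)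
    (fun g hg ↦ hinvol g (hmem i hg)) (fun g hg h hh ↦ hmul g (hmem i hg) h (hmem i hh))
  obtain ⟨t, -, hne, hone⟩ := exists_subset_isOneProdSeq_sum H.subtype (s := Finset.univ)
    (d := fun i ↦ ⟨d i, hdH i⟩) (fun i _ ↦ hd i) (fun i _ ↦ hd_inv i)
    (by simpa only [Finset.card_fin] using Nat.lt_pow_succ_log_self one_lt_two _)
  have hcard : (∑ i ∈ t, F i).card = t.card * 2 := by
    rw [Multiset.card_sum, Finset.sum_const_nat fun i _ ↦ hF i]
  have hpos : 0 < t.card := hne.card_pos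
  have hle : t.card ≤ Nat.log 2 (Nat.card H) + 1 := card_finset_fin_le t
  refine ⟨∑ i ∈ t, F i, (Finset.sum_le_sum_of_subset t.subset_univ).trans hFT, ?_, ?_, ?_, hone⟩
  · exact Multiset.card_pos.1 (by lia)
  · exact hcard ▸ even_two.mul_left _
  · lia

open DihedralGroup in
lemma sr_mul_sr_mem_zpowers_r_one {n : ℕ} (i j : ZMod n) :
    sr i * sr j ∈ Subgroup.zpowers (r (1 : ZMod n)) := by
  obtain ⟨k, hk⟩ := ZMod.intCast_surjective (j - i)
  exact ⟨k, by simp only [r_one_zpow, sr_mul_sr, hk]⟩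

/-- Let `n ≥ 3` and let `T₁` be a sequence over `N = x·H` in `D_{2n}` with
`⌊|T₁|/2⌋ > ⌊log₂ n⌋`.  Then `T₁` has a nonempty 1-product subsequence `T₁'` of even
length with `|T₁'| ≤ 2⌊log₂ n⌋ + 2`. -/
theorem stmt9 (n : ℕ) (hn : 3 ≤ n) (T₁ : Multiset (DihedralGroup n))
    (hN : ∀ g ∈ T₁, ∃ i : ZMod n, g = DihedralGroup.sr i)
    (hlen : Nat.log 2 n < Multiset.card T₁ / 2) :
    ∃ T₁' , T₁' ≤ T₁ ∧ T₁' ≠ 0 ∧ Even (Multiset.card T₁') ∧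
      Multiset.card T₁' ≤ 2 * Nat.log 2 n + 2 ∧ IsOneProdSeq T₁' := by
  have : NeZero n := ⟨by lia⟩
  have hcard : Nat.card (Subgroup.zpowers (DihedralGroup.r (1 : ZMod n))) = n := by
    rw [Nat.card_zpowers, DihedralGroup.orderOf_r_one]
  choose! i hi using hN
  simpa only [hcard] using stmt9_general (Subgroup.zpowers (DihedralGroup.r (1 : ZMod n))) T₁
    (fun g hg ↦ hi g hg ▸ DihedralGroup.sr_mul_self (i g))
    (fun g hg h hh ↦ hi g hg ▸ hi h hh ▸ sr_mul_sr_mem_zpowers_r_one (i g) (i h))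
    (by rwa [hcard])
end

section
/- Let n ≥ 3 and let T₂ be a sequence over H = ⟨y⟩ in the dihedral group D_{2n} with ⌊|T₂|/2⌋ > ⌊log₂ n⌋. Then there exist two disjoint nonempty subsequences W₁ and W₂ of T₂ with 1 ≤ |W₁| = |W₂| ≤ ⌊log₂ n⌋ + 1 whose products are equal: π(W₁) = π(W₂). -/
/-!
Pair off `2k` terms of a sequence over a finite abelian group `H` as `(a₁, b₁), …, (a_k, b_k)`,
where `k = ⌊log₂ |H|⌋ + 1`. As `|H| < 2ᵏ`, two different sets of indices give the same product of
the ratios `aᵢ / bᵢ`; removing their intersection leaves disjoint `s` and `t`. Clearing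
denominators, `∏_s a · ∏_t b = ∏_s b · ∏_t a`, and the two sides have `|s| + |t| ≤ k` factors each.
-/

open Finset
open scoped IsMulCommutative

theorem exists_disjoint_prod_eq_prod_of_card_lt_two_pow {ι M : Type*} [Fintype ι]
    [CancelCommMonoid M] [Finite M] (f : ι → M) (hcard : Nat.card M < 2 ^ Fintype.card ι) :
    ∃ s t : Finset ι, Disjoint s t ∧ s ≠ t ∧ ∏ i ∈ s, f i = ∏ i ∈ t, f i := by
  classical
  have := Fintype.ofFinite M
  obtain ⟨A, B, hne, hprod⟩ := Fintype.exists_ne_map_eq_of_card_lt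
    (fun A : Finset ι ↦ ∏ i ∈ A, f i) (by simpa using hcard)
  exact ⟨A \ B, B \ A, disjoint_sdiff_sdiff, sdiff_ne_sdiff_iff.2 hne,
    prod_sdiff_eq_prod_sdiff_iff.2 hprod⟩

theorem exists_map_univ_le {ι α : Type*} [Fintype ι] {T : Multiset α}
    (hcard : Fintype.card ι ≤ T.card) : ∃ f : ι → α, univ.val.map f ≤ T := by
  classical
  obtain ⟨e⟩ : Nonempty (ι ↪ T) := Function.Embedding.nonempty_of_card_le (by simpa using hcard)
  refine ⟨fun i ↦ (e i : α), ?_⟩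
  calc univ.val.map (fun i ↦ (e i : α))
      = (univ.map e).val.map (fun x : T ↦ (x : α)) := by
        rw [map_val, Multiset.map_map, Function.comp_def]
    _ ≤ univ.val.map (fun x : T ↦ (x : α)) := Multiset.map_le_map (val_le_iff.2 (subset_univ _))
    _ = T := T.map_univ_coe

theorem exists_map_add_map_le {ι α : Type*} [Fintype ι] {T : Multiset α}
    (hcard : 2 * Fintype.card ι ≤ T.card) :
    ∃ a b : ι → α, univ.val.map a + univ.val.map b ≤ T := by
  obtain ⟨f, hf⟩ := exists_map_univ_le (ι := ι ⊕ ι) (T := T) (by simpa [← two_mul] using hcard)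
  refine ⟨f ∘ Sum.inl, f ∘ Sum.inr, ?_⟩
  simpa [← univ_disjSum_univ, Multiset.disjSum] using hf

theorem exists_add_le_prod_eq_prod {G : Type*} [CommGroup G] [Finite G] {k : ℕ}
    (hk : Nat.card G < 2 ^ k) {T : Multiset G} (hT : 2 * k ≤ T.card) :
    ∃ U V : Multiset G, U + V ≤ T ∧ U ≠ 0 ∧ U.card = V.card ∧ U.card ≤ k ∧ U.prod = V.prod := by
  obtain ⟨a, b, hab⟩ := exists_map_add_map_le (ι := Fin k) (T := T) (by simpa using hT)
  obtain ⟨s, t, hdisj, hne, hprod⟩ :=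
    exists_disjoint_prod_eq_prod_of_card_lt_two_pow (a / b) (by simpa using hk)
  refine ⟨s.val.map a + t.val.map b, s.val.map b + t.val.map a, ?_, ?_, by simp, ?_, ?_⟩
  · have hst : s.val + t.val ≤ univ.val := val_le_iff.2 (subset_univ (s.disjUnion t hdisj))
    calc s.val.map a + t.val.map b + (s.val.map b + t.val.map a)
        = (s.val + t.val).map a + (s.val + t.val).map b := by
          simp only [Multiset.map_add]; abel
      _ ≤ univ.val.map a + univ.val.map b :=
          add_le_add (Multiset.map_le_map hst) (Multiset.map_le_map hst)
      _ ≤ T := hab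
  · intro hU
    obtain ⟨hs, ht⟩ : s = ∅ ∧ t = ∅ := by simpa using hU
    exact hne (hs.trans ht.symm)
  · simpa only [card_disjUnion, Fintype.card_fin, Multiset.card_add, Multiset.card_map,
      card_val] using card_le_univ (s.disjUnion t hdisj)
  · rw [Multiset.prod_add, Multiset.prod_add]
    change (∏ i ∈ s, a i) * ∏ i ∈ t, b i = (∏ i ∈ s, b i) * ∏ i ∈ t, a i
    simpa [prod_div_distrib, div_eq_div_iff_mul_eq_mul, mul_comm] using hprod

theorem stmt10_general {G : Type*} [Group G] (H : Subgroup G) [IsMulCommutative H] [Finite H]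
    (T : Multiset G) (hH : ∀ g ∈ T, g ∈ H) (hlen : Nat.log 2 (Nat.card H) < T.card / 2) :
    ∃ l₁ l₂ : List G, (l₁ : Multiset G) + (l₂ : Multiset G) ≤ T ∧
      l₁ ≠ [] ∧ l₁.length = l₂.length ∧ l₁.length ≤ Nat.log 2 (Nat.card H) + 1 ∧
      l₁.prod = l₂.prod := by
  lift T to Multiset H using hH
  rw [Multiset.card_map] at hlen
  obtain ⟨U, V, hle, hne, hcard, hcard_le, hprod⟩ := exists_add_le_prod_eq_prod
    (Nat.lt_pow_succ_log_self one_lt_two (Nat.card H)) (T := T) (by lia)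
  refine ⟨U.toList.map H.subtype, V.toList.map H.subtype, ?_, ?_, ?_, ?_, ?_⟩
  · rw [← Multiset.map_coe, ← Multiset.map_coe, Multiset.coe_toList, Multiset.coe_toList,
      ← Multiset.map_add]
    exact Multiset.map_le_map hle
  · rwa [Ne, List.map_eq_nil_iff, Multiset.toList_eq_nil]
  · simpa only [List.length_map, Multiset.length_toList] using hcard
  · simpa only [List.length_map, Multiset.length_toList] using hcard_le
  · rw [← map_list_prod, ← map_list_prod, Multiset.prod_toList, Multiset.prod_toList, hprod]

theorem r_mem_zpowers_r_one {n : ℕ} (i : ZMod n) :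
    DihedralGroup.r i ∈ Subgroup.zpowers (DihedralGroup.r (1 : ZMod n)) :=
  ⟨i.cast, by simp⟩

/-- Let `n ≥ 3` and let `T₂` be a sequence over `H = ⟨y⟩` in `D_{2n}` with
`⌊|T₂|/2⌋ > ⌊log₂ n⌋`.  Then there exist two disjoint nonempty subsequences `W₁`, `W₂`
of `T₂` (realized by lists `l₁`, `l₂`) with `1 ≤ |W₁| = |W₂| ≤ ⌊log₂ n⌋ + 1` and
`π(W₁) = π(W₂)`. -/
theorem stmt10 (n : ℕ) (hn : 3 ≤ n) (T₂ : Multiset (DihedralGroup n))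
    (hH : ∀ g ∈ T₂, ∃ i : ZMod n, g = DihedralGroup.r i)
    (hlen : Nat.log 2 n < Multiset.card T₂ / 2) :
    ∃ l₁ l₂ : List (DihedralGroup n),
      ((l₁ : Multiset (DihedralGroup n)) + (l₂ : Multiset (DihedralGroup n))) ≤ T₂ ∧
      l₁ ≠ [] ∧ l₁.length = l₂.length ∧ l₁.length ≤ Nat.log 2 n + 1 ∧
      l₁.prod = l₂.prod := by
  have : NeZero n := ⟨by lia⟩
  have hcard : Nat.card (Subgroup.zpowers (DihedralGroup.r (1 : ZMod n))) = n := by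
    rw [Nat.card_zpowers, DihedralGroup.orderOf_r_one]
  simpa only [hcard] using stmt10_general (Subgroup.zpowers (DihedralGroup.r 1)) T₂
    (fun g hg ↦ (hH g hg).elim fun i hi ↦ hi ▸ r_mem_zpowers_r_one i) (by rwa [hcard])
end

section
/- Let n ≥ 2. Every sequence over the dihedral group D_{2n} of length at least 2⌊log₂ n⌋ + 2 has a nonempty ±-1-product subsequence; that is, D_±(D_{2n}) ≤ 2⌊log₂ n⌋ + 2. -/
/-- `T` is a ±-1-product sequence: its terms can be ordered as `g₁, …, g_ℓ` so that
`g₁^{ε₁} ⋯ g_ℓ^{ε_ℓ} = 1` for some signs `ε_i ∈ {1, −1}`. -/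
def IsPMOneProd {G : Type*} [Group G] (T : Multiset G) : Prop :=
  ∃ l : List G, (l : Multiset G) = T ∧
    ∃ ε : Fin l.length → ℤ, (∀ i, ε i = 1 ∨ ε i = -1) ∧
      (List.ofFn fun i : Fin l.length => l.get i ^ ε i).prod = 1

/-!
Let `A` be a finite abelian subgroup of `G` such that any `d` elements of `G` contain a nonempty
subsequence with a signed product in `A`, and let `k > log₂ |A|`. A sequence of length at least
`d * k` contains `k` disjoint blocks of at most `d` terms, the `i`-th having a signed product
`c i ∈ A`. Since `|A| < 2 ^ k`, two subproducts of the `c i` agree, and cancelling the common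
factors gives `∏ i ∈ P, c i = ∏ i ∈ Q, c i` with `P` and `Q` disjoint and not both empty. Reversing
a signed block and flipping its signs inverts its product, so the blocks indexed by `P ∪ Q`
together have signed product `1`.

When `A` has index two, `d = 2` works: an element of `A` is itself a block, and the product of two
elements outside `A` lies in `A`. For the dihedral group, `A` is the subgroup of rotations.
-/

theorem exists_multiset_le_card_eq_s11 {α : Type*} {S : Multiset α} {d : ℕ} (hd : d ≤ S.card) :
    ∃ T ≤ S, T.card = d := by
  have hpos : 0 < (S.powersetCard d).card := by
    rw [Multiset.card_powersetCard]
    exact Nat.choose_pos hd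
  obtain ⟨T, hT⟩ := Multiset.card_pos_iff_exists_mem.1 hpos
  exact ⟨T, Multiset.mem_powersetCard.1 hT⟩

theorem exists_fin_sum_le_of_mul_le_card {α : Type*} {p : Multiset α → Prop} {d : ℕ}
    (hp : ∀ S : Multiset α, S.card = d → ∃ T ≤ S, p T) (k : ℕ) (S : Multiset α)
    (hS : d * k ≤ S.card) :
    ∃ b : Fin k → Multiset α, ∑ i, b i ≤ S ∧ ∀ i, p (b i) := by
  induction k generalizing S with
  | zero => exact ⟨Fin.elim0, by simp, fun i => i.elim0⟩
  | succ k ih =>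
    rw [Nat.mul_succ] at hS
    obtain ⟨U, hUS, hU⟩ := exists_multiset_le_card_eq_s11 (show d ≤ S.card by omega)
    obtain ⟨T, hTU, hT⟩ := hp U hU
    obtain ⟨R, rfl⟩ := Multiset.le_iff_exists_add.1 (hTU.trans hUS)
    have hR : d * k ≤ R.card := by
      have hTd : T.card ≤ d := hU ▸ Multiset.card_le_card hTU
      rw [Multiset.card_add] at hS
      omega
    obtain ⟨b, hb, hpb⟩ := ih R hR
    refine ⟨Fin.cons T b, ?_, Fin.cases hT hpb⟩
    rw [Fin.sum_univ_succ]
    simpa only [Fin.cons_zero, Fin.cons_succ] using add_le_add_right hb T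

theorem exists_disjoint_prod_eq_prod_s11 {M ι : Type*} [CancelCommMonoid M] [Finite M] [Fintype ι]
    [DecidableEq ι] (c : ι → M) (h : Nat.card M < 2 ^ Fintype.card ι) :
    ∃ P Q : Finset ι, Disjoint P Q ∧ (P ∪ Q).Nonempty ∧ ∏ i ∈ P, c i = ∏ i ∈ Q, c i := by
  have := Fintype.ofFinite M
  have hcard : Fintype.card M < Fintype.card (Finset ι) := by
    rwa [Fintype.card_finset, ← Nat.card_eq_fintype_card]
  obtain ⟨P, Q, hne, heq⟩ :=
    Fintype.exists_ne_map_eq_of_card_lt (fun P : Finset ι => ∏ i ∈ P, c i) hcard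
  exact ⟨P \ Q, Q \ P, disjoint_sdiff_sdiff, Finset.symmDiff_nonempty.2 hne,
    Finset.prod_sdiff_eq_prod_sdiff_iff.2 heq⟩

section SignedProducts

variable {G : Type*} [Group G]

/-- `g` is a signed product of the sequence `T`: it equals `g₁^{ε₁} ⋯ g_ℓ^{ε_ℓ}` for some ordering
`l = [g₁, …, g_ℓ]` of `T` and signs `ε_i ∈ {1, −1}`. The signs are encoded by the list `m` of the
factors `g_i^{ε_i}`, so that signed sequences can be concatenated and reversed as lists. -/
def IsPMProd (T : Multiset G) (g : G) : Prop :=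
  ∃ l m : List G, (l : Multiset G) = T ∧
    List.Forall₂ (fun a b => b = a ∨ b = a⁻¹) l m ∧ m.prod = g

namespace IsPMProd

variable {T U : Multiset G} {g h : G}

theorem zero : IsPMProd (0 : Multiset G) 1 :=
  ⟨[], [], rfl, .nil, rfl⟩

theorem singleton (g : G) : IsPMProd {g} g :=
  ⟨[g], [g], rfl, .cons (.inl rfl) .nil, List.prod_singleton⟩

theorem add (hT : IsPMProd T g) (hU : IsPMProd U h) : IsPMProd (T + U) (g * h) := by
  obtain ⟨l, m, rfl, hlm, rfl⟩ := hT
  obtain ⟨l', m', rfl, hlm', rfl⟩ := hU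
  exact ⟨l ++ l', m ++ m', (Multiset.coe_add l l').symm, List.rel_append hlm hlm',
    List.prod_append⟩

theorem inv (hT : IsPMProd T g) : IsPMProd T g⁻¹ := by
  obtain ⟨l, m, rfl, hlm, rfl⟩ := hT
  refine ⟨l.reverse, (m.map (·⁻¹)).reverse, Multiset.coe_reverse l, ?_,
    (List.prod_inv_reverse m).symm⟩
  rw [List.forall₂_reverse_iff, List.forall₂_map_right_iff]
  refine hlm.imp fun a b hab => ?_
  rcases hab with rfl | rfl
  · exact .inr rfl
  · exact .inl (inv_inv a)

theorem sum {A ι : Type*} [CommMonoid A] (f : A →* G) {b : ι → Multiset G} {c : ι → A}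
    (h : ∀ i, IsPMProd (b i) (f (c i))) (P : Finset ι) :
    IsPMProd (∑ i ∈ P, b i) (f (∏ i ∈ P, c i)) := by
  induction P using Finset.cons_induction with
  | empty => simpa only [Finset.sum_empty, Finset.prod_empty, map_one] using zero
  | cons i P hi ih =>
    rw [Finset.sum_cons, Finset.prod_cons, map_mul]
    exact (h i).add ih

theorem isPMOneProd (hT : IsPMProd T 1) : IsPMOneProd T := by
  obtain ⟨l, m, rfl, hlm, hm⟩ := hT
  have hlen : m.length = l.length := hlm.length_eq.symm
  have hsign (i : Fin l.length) :
      ∃ e : ℤ, (e = 1 ∨ e = -1) ∧ m.get (i.cast hlen.symm) = l.get i ^ e := by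
    rcases hlm.get i.2 (i.cast hlen.symm).2 with h | h
    · exact ⟨1, .inl rfl, h.trans (zpow_one _).symm⟩
    · exact ⟨-1, .inr rfl, h.trans (zpow_neg_one _).symm⟩
  choose ε hε hget using hsign
  refine ⟨l, rfl, ε, hε, ?_⟩
  have hfactors : (List.ofFn fun i => l.get i ^ ε i) = m := by
    simp only [← hget]
    exact (List.ofFn_congr hlen m.get).symm.trans (List.ofFn_get m)
  rw [hfactors, hm]

end IsPMProd

open scoped IsMulCommutative in
theorem exists_isPMOneProd_of_exists_isPMProd_mem (A : Subgroup G) [IsMulCommutative A] [Finite A]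
    {d : ℕ} (hd : ∀ S : Multiset G, S.card = d → ∃ T ≤ S, T ≠ 0 ∧ ∃ a ∈ A, IsPMProd T a)
    (S : Multiset G) (hS : d * (Nat.log 2 (Nat.card A) + 1) ≤ S.card) :
    ∃ T ≤ S, T ≠ 0 ∧ IsPMOneProd T := by
  obtain ⟨b, hbS, hb⟩ := exists_fin_sum_le_of_mul_le_card hd _ S hS
  choose hb0 c hcA hbc using hb
  have hcard : Nat.card A < 2 ^ Fintype.card (Fin (Nat.log 2 (Nat.card A) + 1)) := by
    rw [Fintype.card_fin]
    exact Nat.lt_pow_succ_log_self one_lt_two _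
  obtain ⟨P, Q, hPQ, ⟨i, hi⟩, hprod⟩ := exists_disjoint_prod_eq_prod_s11
    (fun i => (⟨c i, hcA i⟩ : A)) hcard
  refine ⟨∑ i ∈ P ∪ Q, b i, ?_, ?_, IsPMProd.isPMOneProd ?_⟩
  · exact (Finset.sum_le_sum_of_subset (Finset.subset_univ _)).trans hbS
  · exact fun h => hb0 i (Finset.sum_eq_zero_iff.1 h i hi)
  · have hsum := IsPMProd.sum A.subtype (c := fun i => ⟨c i, hcA i⟩) hbc
    have hone := (hsum P).add (hsum Q).inv
    rwa [hprod, mul_inv_cancel, ← Finset.sum_union hPQ] at hone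

theorem exists_isPMProd_mem_of_index_eq_two {A : Subgroup G} (hA : A.index = 2) (S : Multiset G)
    (hS : S.card = 2) : ∃ T ≤ S, T ≠ 0 ∧ ∃ a ∈ A, IsPMProd T a := by
  obtain ⟨x, y, rfl⟩ := Multiset.card_eq_two.1 hS
  by_cases hx : x ∈ A
  · exact ⟨{x}, by simp, Multiset.singleton_ne_zero x, x, hx, .singleton x⟩
  by_cases hy : y ∈ A
  · exact ⟨{y}, by simp, Multiset.singleton_ne_zero y, y, hy, .singleton y⟩
  have hxy : x * y ∈ A := (Subgroup.mul_mem_iff_of_index_two hA).2 (iff_of_false hx hy)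
  exact ⟨{x, y}, le_rfl, Multiset.cons_ne_zero, x * y, hxy,
    (IsPMProd.singleton x).add (.singleton y)⟩

theorem stmt11_general (A : Subgroup G) [IsMulCommutative A] [Finite A] (hA : A.index = 2)
    (S : Multiset G) (hS : 2 * Nat.log 2 (Nat.card A) + 2 ≤ S.card) :
    ∃ T ≤ S, T ≠ 0 ∧ IsPMOneProd T :=
  exists_isPMOneProd_of_exists_isPMProd_mem A (exists_isPMProd_mem_of_index_eq_two hA) S hS

end SignedProducts

theorem card_zpowers_r_one (n : ℕ) :
    Nat.card (Subgroup.zpowers (DihedralGroup.r 1 : DihedralGroup n)) = n := by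
  rw [Nat.card_zpowers, DihedralGroup.orderOf_r_one]

theorem index_zpowers_r_one (n : ℕ) [NeZero n] :
    (Subgroup.zpowers (DihedralGroup.r 1 : DihedralGroup n)).index = 2 := by
  have hcard := (Subgroup.zpowers (DihedralGroup.r 1 : DihedralGroup n)).card_mul_index
  rw [card_zpowers_r_one, DihedralGroup.nat_card, mul_comm 2] at hcard
  exact Nat.eq_of_mul_eq_mul_left (NeZero.pos n) hcard

/-- Let `n ≥ 2`.  Every sequence over `D_{2n}` of length at least `2⌊log₂ n⌋ + 2` has a
nonempty ±-1-product subsequence; i.e. `D_±(D_{2n}) ≤ 2⌊log₂ n⌋ + 2`. -/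
theorem stmt11 (n : ℕ) (hn : 2 ≤ n) :
    ∀ S : Multiset (DihedralGroup n), 2 * Nat.log 2 n + 2 ≤ Multiset.card S →
      ∃ T, T ≤ S ∧ T ≠ 0 ∧ IsPMOneProd T := by
  have : NeZero n := ⟨by omega⟩
  simpa only [card_zpowers_r_one] using stmt11_general _ (index_zpowers_r_one n)
end

section
/- Let n ≥ 2 and let S = g₁,…,g_ℓ be a sequence over the dihedral group D_{2n} containing at least one term from N = x·H. If 1 = ∏_{i=1}^{ℓ} g_{τ(i)}^{ε_i} for some permutation τ of {1,…,ℓ} and signs ε_i ∈ {1,−1} (i.e., S is a ±-1-product sequence), then there is a permutation σ of {1,…,ℓ} with ∏_{i=1}^{ℓ} g_{σ(i)} = 1 (i.e., S is a 1-product sequence). -/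
/-!
If every element outside a proper subgroup `H` is an involution, then conjugation by such an element
inverts `H`, so `H` is abelian. Hence in a signed product the signs of the terms outside `H` do not
matter, and the terms in `H` can all be moved to the front, which brings the product to the form
`a * b⁻¹ * m`, where `a` and `b` are products of terms in `H` and `m` is the product of the terms
outside `H`. If there is such a term and `t` is the first one, then `b⁻¹ * t = t * b`, so the signed
product is equal to `a * t * b * (t⁻¹ * m)`, an unsigned product of the same terms. In a dihedral
group, take for `H` the subgroup of rotations.
-/

/-- `IsSigning l u` says that `u` is of the form `[g₁ ^ ε₁, …, g_ℓ ^ ε_ℓ]` with signs `ε_i = ±1`,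
where `l = [g₁, …, g_ℓ]`. The signs are left implicit to allow induction along both lists. -/
abbrev IsSigning {G : Type*} [Group G] (l u : List G) : Prop :=
  List.Forall₂ (fun g v => v = g ∨ v = g⁻¹) l u

section Involutions

variable {G : Type*} [Group G]

theorem isSigning_ofFn_zpow (l : List G) {ε : Fin l.length → ℤ} (hε : ∀ i, ε i = 1 ∨ ε i = -1) :
    IsSigning l (List.ofFn fun i => l.get i ^ ε i) := by
  refine List.forall₂_iff_get.2 ⟨by rw [List.length_ofFn], fun i hi _ => ?_⟩
  rcases hε ⟨i, hi⟩ with h | h <;> simp [h]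

variable {H : Subgroup G}

theorem mul_eq_inv_mul_of_mem_of_notMem (hH : ∀ t ∉ H, t * t = 1) {g t : G} (hg : g ∈ H)
    (ht : t ∉ H) : t * g = g⁻¹ * t := by
  have htg : t * g ∉ H := mt (H.mul_mem_cancel_right hg).1 ht
  calc t * g = (t * g)⁻¹ := (inv_eq_of_mul_eq_one_right (hH _ htg)).symm
    _ = g⁻¹ * t⁻¹ := mul_inv_rev t g
    _ = g⁻¹ * t := by rw [inv_eq_of_mul_eq_one_right (hH t ht)]

theorem isMulCommutative_of_notMem (hH : ∀ t ∉ H, t * t = 1) {t : G} (ht : t ∉ H) :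
    IsMulCommutative H := by
  refine .of_setLike_mul_comm fun g hg k hk => ?_
  have hinv : (g * k)⁻¹ * t = (k * g)⁻¹ * t :=
    calc (g * k)⁻¹ * t = t * g * k := by
          rw [← mul_eq_inv_mul_of_mem_of_notMem hH (H.mul_mem hg hk) ht, mul_assoc]
      _ = g⁻¹ * (t * k) := by rw [mul_eq_inv_mul_of_mem_of_notMem hH hg ht, mul_assoc]
      _ = (k * g)⁻¹ * t := by
          rw [mul_eq_inv_mul_of_mem_of_notMem hH hk ht, mul_inv_rev, mul_assoc]
  exact inv_injective (mul_right_cancel hinv)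

theorem IsSigning.exists_perm_append_prod_eq [IsMulCommutative H] (hH : ∀ t ∉ H, t * t = 1)
    {l u : List G} (h : IsSigning l u) :
    ∃ a b m : List G, (∀ g ∈ a, g ∈ H) ∧ (∀ g ∈ b, g ∈ H) ∧ (∀ g ∈ m, g ∉ H) ∧
      l.Perm (a ++ b ++ m) ∧ u.prod = a.prod * b.prod⁻¹ * m.prod := by
  induction h with
  | nil => exact ⟨[], [], [], by simp⟩
  | @cons g v l u hv _ ih =>
    obtain ⟨a, b, m, ha, hb, hm, hperm, hprod⟩ := ih
    have hab : a.prod * b.prod⁻¹ ∈ H :=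
      H.mul_mem (H.list_prod_mem ha) (H.inv_mem (H.list_prod_mem hb))
    rw [List.prod_cons, hprod]
    by_cases hg : g ∈ H
    · rcases hv with rfl | rfl
      · refine ⟨v :: a, b, m, List.forall_mem_cons.2 ⟨hg, ha⟩, hb, hm, hperm.cons v, ?_⟩
        simp only [List.prod_cons, mul_assoc]
      · refine ⟨a, g :: b, m, ha, List.forall_mem_cons.2 ⟨hg, hb⟩, hm,
          (hperm.cons g).trans (List.perm_middle.symm.append_right m), ?_⟩
        rw [← mul_assoc, setLike_mul_comm (H.inv_mem hg) hab, List.prod_cons,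
          mul_inv_rev]
        simp only [mul_assoc]
    · have hvg : v = g := hv.elim id (·.trans (inv_eq_of_mul_eq_one_right (hH g hg)))
      refine ⟨b, a, g :: m, hb, ha, List.forall_mem_cons.2 ⟨hg, hm⟩,
        ((hperm.trans (List.perm_append_comm.append_right m)).cons g).trans
          List.perm_middle.symm, ?_⟩
      rw [hvg, ← mul_assoc, mul_eq_inv_mul_of_mem_of_notMem hH hab hg, mul_inv_rev, inv_inv,
        List.prod_cons, mul_assoc _ g]

theorem IsSigning.exists_perm_prod_eq (hH : ∀ t ∉ H, t * t = 1) {l u : List G}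
    (h : IsSigning l u) (hl : ∃ t ∈ l, t ∉ H) : ∃ l' : List G, l'.Perm l ∧ l'.prod = u.prod := by
  obtain ⟨s, hsl, hs⟩ := hl
  have := isMulCommutative_of_notMem hH hs
  obtain ⟨a, b, m, ha, hb, hm, hperm, hprod⟩ := h.exists_perm_append_prod_eq hH
  cases m with
  | nil =>
    have hlH : ∀ g ∈ l, g ∈ H := by grind
    exact absurd (hlH s hsl) hs
  | cons t m =>
    refine ⟨a ++ t :: (b ++ m), by classical grind, ?_⟩
    have hbt : t * b.prod = b.prod⁻¹ * t :=
      mul_eq_inv_mul_of_mem_of_notMem hH (H.list_prod_mem hb) (hm t List.mem_cons_self)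
    calc (a ++ t :: (b ++ m)).prod = a.prod * (t * b.prod) * m.prod := by
          simp only [List.prod_append, List.prod_cons, mul_assoc]
      _ = a.prod * b.prod⁻¹ * (t :: m).prod := by
          simp only [hbt, List.prod_cons, mul_assoc]
      _ = u.prod := hprod.symm

theorem stmt12_general (hH : ∀ t ∉ H, t * t = 1) {S : Multiset G} (hS : ∃ t ∈ S, t ∉ H)
    (hpm : IsPMOneProd S) : IsOneProdSeq S := by
  obtain ⟨l, rfl, ε, hε, hprod⟩ := hpm
  obtain ⟨l', hperm, hprod'⟩ := (isSigning_ofFn_zpow l hε).exists_perm_prod_eq hH hS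
  exact ⟨l', Multiset.coe_eq_coe.2 hperm, hprod'.trans hprod⟩

end Involutions

section Dihedral

open DihedralGroup Subgroup

variable {n : ℕ}

theorem r_mem_zpowers_r_one_s12 (i : ZMod n) : r i ∈ zpowers (r 1 : DihedralGroup n) := by
  obtain ⟨k, rfl⟩ := ZMod.intCast_surjective i
  exact ⟨k, r_one_zpow k⟩

theorem sr_notMem_zpowers_r_one (i : ZMod n) : sr i ∉ zpowers (r 1 : DihedralGroup n) := by
  rintro ⟨k, hk⟩
  simp at hk

theorem mul_self_eq_one_of_notMem_zpowers_r_one :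
    ∀ t ∉ zpowers (r 1 : DihedralGroup n), t * t = 1
  | r i, h => absurd (r_mem_zpowers_r_one_s12 i) h
  | sr i, _ => sr_mul_self i

end Dihedral

/-- Let `n ≥ 2` and let `S` be a sequence over `D_{2n}` containing at least one term
from `N = x·H`.  If `S` is a ±-1-product sequence, then `S` is a 1-product sequence. -/
theorem stmt12 (n : ℕ) (hn : 2 ≤ n) (S : Multiset (DihedralGroup n))
    (hN : ∃ g ∈ S, ∃ i : ZMod n, g = DihedralGroup.sr i)
    (hpm : IsPMOneProd S) :
    IsOneProdSeq S := by
  obtain ⟨_, hgS, i, rfl⟩ := hN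
  exact stmt12_general mul_self_eq_one_of_notMem_zpowers_r_one
    ⟨_, hgS, sr_notMem_zpowers_r_one i⟩ hpm
end

section
/- Let n be an odd positive integer and let S = g₁,…,g_ℓ be a sequence over the cyclic group ℤ/nℤ with ℓ ≥ n. Then there exist a nonempty subset I ⊆ {1,…,ℓ} of odd cardinality and signs ε_i ∈ {1,−1} for i ∈ I such that Σ_{i∈I} ε_i·g_i = 0 in ℤ/nℤ. -/
/-!
Attach to each term a parity label and work in `H = G × ℤ/2ℤ` with the sequence `(g i, 1)`: a
signed subsum equal to `t = (0, 1)` is exactly a signed zero-sum with an odd number of terms.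
Since `G` has odd order, `0` and `t` are the only elements of `H` fixed by negation, and `t` is a
multiple of every `(g i, 1)`.

Suppose `t` is not a signed subsum. The set of signed subsums is symmetric and contains `0`.
Whenever a term `a` is added to the sequence the set must grow, as otherwise it would be invariant
under translation by `a` and contain the multiple `t` of `a`. A new element `x` brings along `-x`,
which is distinct from it because `x ≠ 0, t`, so each term contributes at least two new elements.
After `|G|` terms there would be more than `2 |G| = |H|` signed subsums.
-/

section SignedSubsums

open Finset AddSubgroup
open scoped Pointwise

variable {ι H : Type*} [AddCommGroup H] [DecidableEq H]

/-- The set of all signed subsums `∑ i ∈ I, ±f i` with `I ⊆ s`, the empty one included, encoded as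
the Minkowski sum of the sets `{-f i, 0, f i}`; see `mem_signedSubsums_iff`. -/
def signedSubsums (f : ι → H) (s : Finset ι) : Finset H :=
  ∑ i ∈ s, {-f i, 0, f i}

theorem mem_signedSubsums_iff {f : ι → H} {s : Finset ι} {x : H} :
    x ∈ signedSubsums f s ↔ ∃ I ⊆ s, ∃ ε : ι → ℤ, (∀ i, ε i = 1 ∨ ε i = -1) ∧
      ∑ i ∈ I, ε i • f i = x := by
  classical
  rw [signedSubsums, ← mem_coe, coe_sum, Set.mem_finsetSum]
  constructor
  · rintro ⟨c, hc, rfl⟩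
    refine ⟨{i ∈ s | c i ≠ 0}, filter_subset _ _, fun i ↦ if c i = f i then 1 else -1,
      fun i ↦ ite_eq_or_eq _ _ _, ?_⟩
    rw [← sum_filter_ne_zero s]
    refine sum_congr rfl fun i hi ↦ ?_
    obtain ⟨his, hi0⟩ := mem_filter.mp hi
    have hci : c i = -f i ∨ c i = 0 ∨ c i = f i := by simpa using hc his
    beta_reduce
    rcases hci with h | h | h
    · split_ifs with h'
      · rw [one_zsmul, h']
      · rw [neg_one_zsmul, h]
    · exact absurd h hi0
    · rw [if_pos h, one_zsmul, h]
  · rintro ⟨I, hI, ε, hε, rfl⟩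
    refine ⟨fun i ↦ if i ∈ I then ε i • f i else 0, fun {i} _ ↦ ?_, ?_⟩
    · rcases hε i with h | h <;> by_cases hi : i ∈ I <;> simp [h, hi]
    · rw [sum_ite_mem, inter_eq_right.mpr hI]

theorem signedSubsums_insert [DecidableEq ι] (f : ι → H) {s : Finset ι} {i : ι} (hi : i ∉ s) :
    signedSubsums f (insert i s) = {-f i, 0, f i} + signedSubsums f s :=
  sum_insert hi

theorem zero_mem_signedSubsums (f : ι → H) (s : Finset ι) : 0 ∈ signedSubsums f s :=
  mem_signedSubsums_iff.mpr ⟨∅, empty_subset s, fun _ ↦ 1, fun _ ↦ .inl rfl, sum_empty⟩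

theorem neg_signedSubsums (f : ι → H) (s : Finset ι) : -signedSubsums f s = signedSubsums f s := by
  rw [signedSubsums, ← sum_neg_distrib]
  refine sum_congr rfl fun i _ ↦ ?_
  ext x
  simp only [mem_neg', mem_insert, mem_singleton, neg_eq_iff_eq_neg,
    neg_neg, neg_zero]
  tauto

theorem mem_of_mem_zmultiples_of_vadd_subset {A : Finset H} {a t : H} (ht : t ∈ zmultiples a)
    (h0 : 0 ∈ A) (hA : a +ᵥ A ⊆ A) : t ∈ A := by
  have ha : a ∈ AddAction.stabilizer H A :=
    AddAction.mem_stabilizer_finset_iff_vadd_finset_subset.mpr hA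
  have htA : t ∈ AddAction.stabilizer H A := zmultiples_le_of_mem ha ht
  simpa using (AddAction.mem_stabilizer_finset.mp htA 0).mpr h0

theorem card_add_two_le_of_ssubset {A B : Finset H} (hAB : A ⊂ B) (hA : -A = A) (hB : -B = B)
    (hne : ∀ x ∈ B, x ∉ A → -x ≠ x) : #A + 2 ≤ #B := by
  obtain ⟨x, hxB, hxA⟩ := exists_of_ssubset hAB
  have hpair : {-x, x} ⊆ B \ A := by
    have hnxB : -x ∈ B := by rwa [← mem_neg', hB]
    have hnxA : -x ∉ A := by rwa [← mem_neg', hA]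
    simp [insert_subset_iff, hxB, hxA, hnxB, hnxA]
  calc
    #A + 2 = #A + #{-x, x} := by rw [card_pair (hne x hxB hxA)]
    _ ≤ #A + #(B \ A) := by gcongr
    _ = #B := by rw [add_comm, card_sdiff_add_card_eq_card hAB.subset]

variable {f : ι → H} {s : Finset ι} {t : H}

theorem two_mul_card_lt_card_signedSubsums (hneg : ∀ x : H, -x = x → x = 0 ∨ x = t)
    (hf : ∀ i ∈ s, t ∈ zmultiples (f i)) (ht : t ∉ signedSubsums f s) :
    2 * #s < #(signedSubsums f s) := by
  classical
  induction s using Finset.induction_on with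
  | empty => simpa using ⟨0, zero_mem_signedSubsums f ∅⟩
  | insert i s hi ih =>
    set A := signedSubsums f s
    set B := signedSubsums f (insert i s)
    have hBA : B = {-f i, 0, f i} + A := signedSubsums_insert f hi
    have hAB : A ⊆ B := hBA ▸ subset_add_right A (by simp)
    have hne : A ≠ B := by
      intro h
      have htrans : f i +ᵥ A ⊆ A := by
        conv_rhs => rw [h, hBA]
        exact vadd_finset_subset_add (by simp)
      exact ht (hAB (mem_of_mem_zmultiples_of_vadd_subset (hf i (mem_insert_self i s))
        (zero_mem_signedSubsums f s) htrans))
    have hgrow : #A + 2 ≤ #B := by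
      refine card_add_two_le_of_ssubset (hAB.ssubset_of_ne hne) (neg_signedSubsums f s)
        (neg_signedSubsums f _) fun x hxB hxA hx ↦ ?_
      rcases hneg x hx with rfl | rfl
      exacts [hxA (zero_mem_signedSubsums f s), ht hxB]
    have hcard : 2 * #s < #A := ih (fun j hj ↦ hf j (mem_insert_of_mem hj)) fun h ↦ ht (hAB h)
    rw [card_insert_of_notMem hi]
    lia

theorem mem_signedSubsums_of_card_le [Finite H] (hneg : ∀ x : H, -x = x → x = 0 ∨ x = t)
    (hf : ∀ i ∈ s, t ∈ zmultiples (f i)) (hs : Nat.card H ≤ 2 * #s) : t ∈ signedSubsums f s := by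
  have := Fintype.ofFinite H
  by_contra ht
  have hlt := two_mul_card_lt_card_signedSubsums hneg hf ht
  have hle := card_le_univ (signedSubsums f s)
  rw [← Nat.card_eq_fintype_card] at hle
  lia

end SignedSubsums

section OddOrder

variable {G : Type*} [AddCommGroup G]

theorem eq_zero_of_neg_eq_self_of_odd_card (hodd : Odd (Nat.card G)) {x : G} (hx : -x = x) :
    x = 0 := by
  have hx2 : 2 • x = 0 := by rw [two_nsmul, ← neg_eq_iff_add_eq_zero, hx]
  exact (nsmul_eq_zero_iff_of_coprime hodd.coprime_two_left).mp ⟨hx2, card_nsmul_eq_zero'⟩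

theorem eq_zero_or_eq_zero_one_of_neg_eq_self (hodd : Odd (Nat.card G)) {x : G × ZMod 2}
    (hx : -x = x) : x = 0 ∨ x = (0, 1) := by
  obtain ⟨y, p⟩ := x
  obtain rfl : y = 0 := eq_zero_of_neg_eq_self_of_odd_card hodd (congrArg Prod.fst hx)
  fin_cases p
  exacts [.inl rfl, .inr rfl]

theorem zero_one_mem_zmultiples (hodd : Odd (Nat.card G)) (x : G) :
    ((0, 1) : G × ZMod 2) ∈ AddSubgroup.zmultiples (x, 1) := by
  have hcard : Nat.card G • ((x, 1) : G × ZMod 2) = (0, 1) := by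
    rw [Prod.smul_mk, card_nsmul_eq_zero', nsmul_one, ZMod.natCast_eq_one_iff_odd.mpr hodd]
  exact hcard ▸ AddSubgroup.nsmul_mem_zmultiples _ _

end OddOrder

theorem sum_zsmul_one_zmod_two {ι : Type*} {ε : ι → ℤ} (hε : ∀ i, ε i = 1 ∨ ε i = -1)
    (I : Finset ι) : ∑ i ∈ I, ε i • (1 : ZMod 2) = I.card := by
  have hone : ∀ i, ε i • (1 : ZMod 2) = 1 := fun i ↦ by rcases hε i with h | h <;> simp [h]
  simp [hone]

theorem stmt13_general {ι G : Type*} [Fintype ι] [AddCommGroup G] (hodd : Odd (Nat.card G))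
    (hcard : Nat.card G ≤ Fintype.card ι) (g : ι → G) :
    ∃ I : Finset ι, I.Nonempty ∧ Odd I.card ∧
      ∃ ε : ι → ℤ, (∀ i, ε i = 1 ∨ ε i = -1) ∧ (∑ i ∈ I, ε i • g i) = 0 := by
  classical
  have : Finite G := Nat.finite_of_card_ne_zero hodd.pos.ne'
  have hmem : (0, 1) ∈ signedSubsums (fun i ↦ (g i, (1 : ZMod 2))) Finset.univ := by
    refine mem_signedSubsums_of_card_le (fun _ ↦ eq_zero_or_eq_zero_one_of_neg_eq_self hodd)
      (fun i _ ↦ zero_one_mem_zmultiples hodd (g i)) ?_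
    rw [Nat.card_prod, Nat.card_zmod, Finset.card_univ]
    lia
  obtain ⟨I, -, ε, hε, hsum⟩ := mem_signedSubsums_iff.mp hmem
  simp only [Prod.smul_mk, Prod.ext_iff, Prod.fst_sum, Prod.snd_sum] at hsum
  obtain ⟨hzero, hparity⟩ := hsum
  rw [sum_zsmul_one_zmod_two hε, ZMod.natCast_eq_one_iff_odd] at hparity
  exact ⟨I, Finset.card_pos.mp hparity.pos, hparity, ε, hε, hzero⟩

/-- Let `n` be an odd positive integer and let `g₁, …, g_ℓ` be a sequence over `ℤ/nℤ`
with `ℓ ≥ n`.  Then there is a nonempty index set `I` of odd cardinality and signs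
`ε_i ∈ {1, −1}` such that `∑_{i ∈ I} ε_i · g_i = 0`. -/
theorem stmt13 (n : ℕ) (hn : 0 < n) (hodd : Odd n) (ℓ : ℕ) (hl : n ≤ ℓ)
    (g : Fin ℓ → ZMod n) :
    ∃ I : Finset (Fin ℓ), I.Nonempty ∧ Odd I.card ∧
      ∃ ε : Fin ℓ → ℤ, (∀ i, ε i = 1 ∨ ε i = -1) ∧
        (∑ i ∈ I, ε i • g i) = 0 := by
  exact stmt13_general (by rwa [Nat.card_zmod]) (by rwa [Nat.card_zmod, Fintype.card_fin]) g
end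

section
/- Let n ≥ 3 and d be positive integers with d odd and n | d. The sequence W = x^{[2d−1]} · (y^{2⁰}, y^{2¹}, …, y^{2^{⌊log₂ n⌋−1}}) over the dihedral group D_{2n} (2d−1 copies of x together with the elements y^{2^i} for 0 ≤ i ≤ ⌊log₂ n⌋−1), which has length 2d + ⌊log₂ n⌋ − 1, has no nonempty 1-product subsequence T with |T| ≡ 0 (mod d). -/
/-!
Since `x * y = y⁻¹ * x`, moving every `x` to the front shows that any ordering of `a` copies of `x`
together with powers `y ^ f i` has product `x ^ a * y ^ (∑ ± f i)` for some choice of signs.  In the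
dihedral group this equals `1` only if `a` is even and `n` divides `∑ ± 2 ^ i`.  A nonempty signed
sum of distinct powers of two is nonzero, because its top term outweighs the rest, and it is less
than `n` in absolute value when all exponents are below `⌊log₂ n⌋`; so no power of `y` occurs.  The
length is then an even number `a` with `0 < a < 2 * d`, which the odd number `d` cannot divide.
-/

open DihedralGroup Multiset

theorem abs_sum_units_mul_pow_lt {b : ℕ} (hb : 2 ≤ b) (ε : ℕ → ℤˣ) {k : ℕ} {s : Finset ℕ}
    (hs : ∀ i ∈ s, i < k) : |∑ i ∈ s, (ε i : ℤ) * b ^ i| < (b : ℤ) ^ k :=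
  calc |∑ i ∈ s, (ε i : ℤ) * b ^ i|
      ≤ ∑ i ∈ s, |(ε i : ℤ) * b ^ i| := Finset.abs_sum_le_sum_abs _ _
    _ = ∑ i ∈ s, (b : ℤ) ^ i := by simp [abs_mul, Int.abs_eq_natAbs]
    _ < (b : ℤ) ^ k := mod_cast Nat.geomSum_lt hb hs

theorem sum_units_mul_pow_ne_zero {b : ℕ} (hb : 2 ≤ b) (ε : ℕ → ℤˣ) {s : Finset ℕ}
    (hs : s.Nonempty) : ∑ i ∈ s, (ε i : ℤ) * b ^ i ≠ 0 := by
  intro h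
  have hrest : |∑ i ∈ s.erase (s.max' hs), (ε i : ℤ) * b ^ i| < (b : ℤ) ^ s.max' hs :=
    abs_sum_units_mul_pow_lt hb ε fun _ => s.lt_max'_of_mem_erase_max' hs
  rw [← Finset.add_sum_erase _ _ (s.max'_mem hs)] at h
  simp [eq_neg_of_add_eq_zero_right h, abs_mul, Int.abs_eq_natAbs] at hrest

section Subsequences

variable {α β : Type*}

theorem exists_le_map_eq_of_le_map {f : α → β} {S : Multiset α} {T : Multiset β}
    (h : T ≤ S.map f) : ∃ S' ≤ S, S'.map f = T := by
  obtain ⟨U, hU⟩ := Multiset.le_iff_exists_add.mp h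
  have hrel : Rel (fun a b => f a = b) S (T + U) := by rw [← rel_map_left, rel_eq, hU]
  obtain ⟨S₁, S₂, hS₁, -, rfl⟩ := rel_add_right.mp hrel
  exact ⟨S₁, le_add_right _ _, by rwa [← rel_map_left, rel_eq] at hS₁⟩

theorem exists_add_eq_of_le_add {S₁ S₂ T : Multiset α} (h : T ≤ S₁ + S₂) :
    ∃ T₁ ≤ S₁, ∃ T₂ ≤ S₂, T₁ + T₂ = T := by
  classical
  refine ⟨T ∩ S₁, inter_le_right, T - S₁, Multiset.sub_le_iff_le_add'.mpr h, ?_⟩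
  rw [add_comm, sub_add_inter]

theorem exists_eq_replicate_add_map_of_le {m : ℕ} {x : β} {f : α → β} {s : Finset α}
    {T : Multiset β} (h : T ≤ replicate m x + s.val.map f) :
    ∃ a ≤ m, ∃ t ⊆ s, T = replicate a x + t.val.map f := by
  obtain ⟨A, hA, B, hB, rfl⟩ := exists_add_eq_of_le_add h
  obtain ⟨a, ha, rfl⟩ := le_replicate_iff.mp hA
  obtain ⟨u, hu, rfl⟩ := exists_le_map_eq_of_le_map hB
  exact ⟨a, ha, ⟨u, nodup_of_le hu s.nodup⟩, Finset.val_le_iff.mp hu, rfl⟩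

end Subsequences

section Reordering

variable {G ι : Type*} [Group G] {x y : G}

theorem zpow_mul_pow_of_semiconjBy_inv (h : SemiconjBy x y y⁻¹) (m : ℤ) (a : ℕ) :
    y ^ m * x ^ a = x ^ a * y ^ ((-1) ^ a * m) := by
  induction a with
  | zero => simp
  | succ a ih =>
    have hx (k : ℤ) : y ^ k * x = x * y ^ (-k) := by
      simpa using (h.zpow_right (-k)).eq.symm
    calc y ^ m * x ^ (a + 1) = x ^ a * (y ^ ((-1) ^ a * m) * x) := by
          rw [pow_succ, ← mul_assoc, ih, mul_assoc]
      _ = x ^ (a + 1) * y ^ ((-1) ^ (a + 1) * m) := by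
          rw [hx, ← mul_assoc, ← pow_succ, pow_succ (-1 : ℤ), mul_neg_one, neg_mul]

theorem exists_prod_eq_pow_mul_zpow_sum (h : SemiconjBy x y y⁻¹) (f : ι → ℤ) (l : List G)
    {a : ℕ} {s : Finset ι} (hl : (l : Multiset G) = replicate a x + s.val.map (y ^ f ·)) :
    ∃ ε : ι → ℤˣ, l.prod = x ^ a * y ^ ∑ i ∈ s, (ε i : ℤ) * f i := by
  classical
  induction l generalizing a s with
  | nil =>
    obtain ⟨rfl, rfl⟩ : a = 0 ∧ s = ∅ := by simpa using congrArg card hl.symm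
    exact ⟨1, by simp⟩
  | cons g l ih =>
    have hg : g ∈ replicate a x + s.val.map (y ^ f ·) := hl ▸ mem_cons_self g l
    rw [← cons_coe] at hl
    rcases mem_add.mp hg with hgx | hgy
    · obtain ⟨ha, rfl⟩ := mem_replicate.mp hgx
      obtain ⟨a, rfl⟩ := Nat.exists_eq_succ_of_ne_zero ha
      rw [replicate_succ, cons_add, cons_inj_right] at hl
      obtain ⟨ε, hε⟩ := ih hl
      exact ⟨ε, by rw [List.prod_cons, hε, ← mul_assoc, pow_succ']⟩
    · obtain ⟨j, hj, rfl⟩ := mem_map.mp hgy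
      obtain ⟨t, hjt, rfl⟩ : ∃ t, ∃ hjt : j ∉ t, s = t.cons j hjt :=
        ⟨s.erase j, s.notMem_erase j, by simp [Finset.insert_erase hj]⟩
      rw [Finset.cons_val, map_cons, add_cons, cons_inj_right] at hl
      obtain ⟨ε, hε⟩ := ih hl
      refine ⟨Function.update ε j ((-1) ^ a), ?_⟩
      have hsum : ∑ i ∈ t, (Function.update ε j ((-1) ^ a) i : ℤ) * f i =
          ∑ i ∈ t, (ε i : ℤ) * f i :=
        Finset.sum_congr rfl fun i hi => by
          rw [Function.update_of_ne (ne_of_mem_of_not_mem hi hjt)]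
      rw [List.prod_cons, hε, ← mul_assoc, zpow_mul_pow_of_semiconjBy_inv h, mul_assoc, ← zpow_add,
        Finset.sum_cons, hsum]
      simp

end Reordering

section Dihedral

variable {n : ℕ}

theorem semiconjBy_sr_r (i j : ZMod n) : SemiconjBy (sr i) (r j) (r j)⁻¹ := by
  simp [SemiconjBy]

theorem sr_pow_mul_r_eq_one_iff (i j : ZMod n) (a : ℕ) :
    sr i ^ a * r j = 1 ↔ Even a ∧ j = 0 := by
  rcases a.even_or_odd' with ⟨c, rfl | rfl⟩
  · simp only [pow_mul, pow_two, sr_mul_self, one_pow, one_mul, even_two_mul, true_and]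
    rw [one_def, r.injEq]
  · simp [pow_succ, pow_mul, one_def, -r_zero]

theorem IsOneProdSeq.even_and_eq_empty {b k a : ℕ} (hb : 2 ≤ b) (hk : b ^ k ≤ n) {j : ZMod n}
    {s : Finset ℕ} (hs : ∀ i ∈ s, i < k)
    (h : IsOneProdSeq (replicate a (sr j) + s.val.map (r 1 ^ b ^ ·))) : Even a ∧ s = ∅ := by
  obtain ⟨l, hl, hprod⟩ := h
  simp only [← zpow_natCast (r 1), Nat.cast_pow] at hl
  obtain ⟨ε, hε⟩ := exists_prod_eq_pow_mul_zpow_sum (semiconjBy_sr_r j 1) _ l hl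
  rw [hprod, r_one_zpow, eq_comm, sr_pow_mul_r_eq_one_iff, ZMod.intCast_zmod_eq_zero_iff_dvd] at hε
  obtain ⟨ha, hdvd⟩ := hε
  have hlt : |∑ i ∈ s, (ε i : ℤ) * b ^ i| < n :=
    (abs_sum_units_mul_pow_lt hb ε hs).trans_le (mod_cast hk)
  refine ⟨ha, Finset.not_nonempty_iff_eq_empty.mp fun hne => ?_⟩
  exact sum_units_mul_pow_ne_zero hb ε hne (Int.eq_zero_of_abs_lt_dvd hdvd hlt)

end Dihedral

theorem stmt17_general (n d : ℕ) (hn : n ≠ 0) (hodd : Odd d) :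
    card (replicate (2 * d - 1) (sr 0 : DihedralGroup n) +
      (range (Nat.log 2 n)).map (fun i => (r 1 : DihedralGroup n) ^ (2 ^ i))) =
      2 * d + Nat.log 2 n - 1 ∧
    ∀ T, T ≤ replicate (2 * d - 1) (sr 0 : DihedralGroup n) +
        (range (Nat.log 2 n)).map (fun i => (r 1 : DihedralGroup n) ^ (2 ^ i)) →
      T ≠ 0 → d ∣ card T → ¬ IsOneProdSeq T := by
  have hd : 0 < d := hodd.pos
  refine ⟨by simp only [card_add, card_replicate, card_map, card_range]; omega, ?_⟩
  intro T hT hT0 hdT hone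
  obtain ⟨a, ha, t, ht, rfl⟩ :=
    exists_eq_replicate_add_map_of_le (s := Finset.range (Nat.log 2 n)) hT
  obtain ⟨heven, rfl⟩ : Even a ∧ t = ∅ :=
    hone.even_and_eq_empty le_rfl (Nat.pow_log_le_self 2 hn) fun i hi => Finset.mem_range.mp (ht hi)
  have hda : d ∣ a := by simpa using hdT
  have ha0 : a ≠ 0 := by rintro rfl; simp at hT0
  have had : a = d := Nat.eq_of_dvd_of_lt_two_mul ha0 hda (by omega)
  exact Nat.not_even_iff_odd.mpr hodd (had ▸ heven)

/-- Let `n ≥ 3` and `d` be positive integers with `d` odd and `n ∣ d`.  The sequence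
`W = x^{[2d−1]}·(y^{2⁰}, y^{2¹}, …, y^{2^{⌊log₂ n⌋−1}})` over `D_{2n}` has length
`2d + ⌊log₂ n⌋ − 1` and has no nonempty 1-product subsequence of length divisible
by `d`. -/
theorem stmt17 (n d : ℕ) (hn : 3 ≤ n) (hd : 0 < d) (hodd : Odd d) (hnd : n ∣ d) :
    Multiset.card
        (Multiset.replicate (2 * d - 1) (DihedralGroup.sr 0 : DihedralGroup n) +
          (Multiset.range (Nat.log 2 n)).map
            (fun i => (DihedralGroup.r 1 : DihedralGroup n) ^ (2 ^ i))) =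
      2 * d + Nat.log 2 n - 1 ∧
    ∀ T, T ≤ Multiset.replicate (2 * d - 1) (DihedralGroup.sr 0 : DihedralGroup n) +
          (Multiset.range (Nat.log 2 n)).map
            (fun i => (DihedralGroup.r 1 : DihedralGroup n) ^ (2 ^ i)) →
      T ≠ 0 → d ∣ Multiset.card T → ¬ IsOneProdSeq T :=
  stmt17_general n d (by omega) hodd
end

section
/- Let n ≥ 3 and d be positive integers with gcd(n, d) = 1. The sequence W = x · y^{[nd−1]} over the dihedral group D_{2n} (one copy of x together with nd−1 copies of y), which has length nd, has no nonempty 1-product subsequence T with |T| ≡ 0 (mod d). -/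
/-!
A product equal to `1` in which `x` occurs once and every other term is a power of `y` can be solved
for `x`, giving `x ∈ ⟨y⟩`. A reflection is not a power of a rotation, so a 1-product subsequence of
`x · y^[m]` consists of `k ≤ m` copies of `y`, where `orderOf y ∣ k`. If `d ∣ k` as well, then
`lcm (orderOf y) d ∣ k`, which is impossible for `0 < k ≤ m` when `m` is smaller than this lcm.
-/

namespace IsOneProdSeq

variable {G : Type*} [Group G] {H : Subgroup G} {x : G} {S T : Multiset G}

theorem mem_of_cons (h : IsOneProdSeq (x ::ₘ T)) (hT : ∀ g ∈ T, g ∈ H) : x ∈ H := by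
  obtain ⟨l, hl, hprod⟩ := h
  obtain ⟨l₁, l₂, rfl⟩ : ∃ l₁ l₂, l = l₁ ++ x :: l₂ :=
    List.append_of_mem (by simp [← Multiset.mem_coe, hl])
  have hT_eq : T = ↑(l₁ ++ l₂) := by
    rw [← Multiset.cons_inj_right x, ← hl, Multiset.cons_coe, Multiset.coe_eq_coe]
    exact List.perm_middle
  have h₁ : l₁.prod ∈ H := H.list_prod_mem fun g hg => hT g (by simp [hT_eq, hg])
  have h₂ : l₂.prod ∈ H := H.list_prod_mem fun g hg => hT g (by simp [hT_eq, hg])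
  have hmem : l₁.prod * (x * l₂.prod) ∈ H := by
    rw [← List.prod_cons, ← List.prod_append, hprod]
    exact H.one_mem
  rwa [H.mul_mem_cancel_left h₁, H.mul_mem_cancel_right h₂] at hmem

theorem le_of_le_cons (h : IsOneProdSeq T) (hle : T ≤ x ::ₘ S) (hS : ∀ g ∈ S, g ∈ H)
    (hx : x ∉ H) : T ≤ S := by
  refine (Multiset.le_cons_of_notMem fun hxT => hx ?_).1 hle
  obtain ⟨T', rfl⟩ := Multiset.exists_cons_of_mem hxT
  rw [Multiset.cons_le_cons_iff] at hle
  exact h.mem_of_cons fun g hg => hS g (Multiset.mem_of_le hle hg)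

end IsOneProdSeq

theorem isOneProdSeq_replicate_iff_s18 {G : Type*} [Group G] {y : G} {k : ℕ} :
    IsOneProdSeq (Multiset.replicate k y) ↔ orderOf y ∣ k := by
  simp [IsOneProdSeq, ← Multiset.coe_replicate, List.perm_replicate, orderOf_dvd_iff_pow_eq_one]

theorem sr_notMem_zpowers_r {n : ℕ} (i j : ZMod n) :
    DihedralGroup.sr i ∉ Subgroup.zpowers (DihedralGroup.r j) := by
  rintro ⟨k, hk⟩
  simp [DihedralGroup.r_zpow] at hk

theorem stmt18_general {G : Type*} [Group G] {x y : G} (hx : x ∉ Subgroup.zpowers y)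
    (hy : IsOfFinOrder y) {d : ℕ} (hd : 0 < d) :
    Multiset.card (x ::ₘ Multiset.replicate ((orderOf y).lcm d - 1) y) = (orderOf y).lcm d ∧
    ∀ T, T ≤ x ::ₘ Multiset.replicate ((orderOf y).lcm d - 1) y →
      T ≠ 0 → d ∣ Multiset.card T → ¬ IsOneProdSeq T := by
  have hpos : 0 < (orderOf y).lcm d := Nat.lcm_pos hy.orderOf_pos hd
  refine ⟨by rw [Multiset.card_cons, Multiset.card_replicate, Nat.sub_add_cancel hpos], ?_⟩
  intro T hle hT hdvd hone
  have hmem : ∀ g ∈ Multiset.replicate ((orderOf y).lcm d - 1) y, g ∈ Subgroup.zpowers y := by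
    intro g hg
    rw [Multiset.eq_of_mem_replicate hg]
    exact Subgroup.mem_zpowers y
  obtain ⟨k, hk, rfl⟩ := Multiset.le_replicate_iff.1 (hone.le_of_le_cons hle hmem hx)
  rw [Multiset.card_replicate] at hdvd
  have hlcm : (orderOf y).lcm d ∣ k := Nat.lcm_dvd (isOneProdSeq_replicate_iff_s18.1 hone) hdvd
  obtain rfl : k = 0 := Nat.eq_zero_of_dvd_of_lt hlcm (by lia)
  exact hT (Multiset.replicate_zero y)

/-- Let `n ≥ 3` and `d` be positive integers with `gcd(n, d) = 1`.  The sequence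
`W = x·y^{[nd−1]}` over `D_{2n}`, of length `nd`, has no nonempty 1-product
subsequence of length divisible by `d`. -/
theorem stmt18 (n d : ℕ) (hn : 3 ≤ n) (hd : 0 < d) (hgcd : Nat.gcd n d = 1) :
    Multiset.card
        ((DihedralGroup.sr 0 : DihedralGroup n) ::ₘ
          Multiset.replicate (n * d - 1) (DihedralGroup.r 1 : DihedralGroup n)) =
      n * d ∧
    ∀ T, T ≤ (DihedralGroup.sr 0 : DihedralGroup n) ::ₘ
          Multiset.replicate (n * d - 1) (DihedralGroup.r 1 : DihedralGroup n) →
      T ≠ 0 → d ∣ Multiset.card T → ¬ IsOneProdSeq T := by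
  have hy : IsOfFinOrder (DihedralGroup.r 1 : DihedralGroup n) := orderOf_pos_iff.1 (by simp; lia)
  simpa [Nat.Coprime.lcm_eq_mul hgcd] using stmt18_general (sr_notMem_zpowers_r 0 1) hy hd
end
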